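/- For every n ≥ 5, a set S of vertices of the cycle graph C_n is an ERR:LD set of C_n if and only if S is the entire vertex set of C_n. In particular, the minimum cardinality of an ERR:LD set of C_n is n. -/

import Mathlib

open scoped symmDiff

variable {V : Type*}

/-- The closed neighborhood `N[v]` of a vertex. -/
def closedNbhd (G : SimpleGraph V) (v : V) : Set V := insert v (G.neighborSet v)

/-- `S` is an error-correcting locating-dominating (ERR:LD) set: conditions (i)-(iv). -/
def IsErrLD (G : SimpleGraph V) (S : Set V) : Prop :=
  (∀ v : V, 3 ≤ (closedNbhd G v ∩ S).encard) ∧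
  (∀ v ∈ S, ∀ u ∈ S, u ≠ v →
    1 ≤ ((((G.neighborSet v ∩ S) ∆ (G.neighborSet u ∩ S)) \ {v, u}).encard)) ∧
  (∀ v ∉ S, ∀ u ∈ S,
    2 ≤ ((((G.neighborSet v ∩ S) ∆ (G.neighborSet u ∩ S)) \ {u}).encard)) ∧
  (∀ v ∉ S, ∀ u ∉ S, u ≠ v →
    3 ≤ (((G.neighborSet v ∩ S) ∆ (G.neighborSet u ∩ S)).encard))

/-- The cycle graph `C_n` on vertex set `ZMod n`, `i` adjacent to `i ± 1`. -/
def cycleGraph (n : ℕ) : SimpleGraph (ZMod n) :=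
  SimpleGraph.fromRel (fun i j => j = i + 1)

/-!
A closed neighborhood of `C_n` has exactly three vertices, so the requirement `3 ≤ |N[v] ∩ S|` puts
all of `N[v]` into `S`. Hence only the full vertex set can qualify; for it, conditions (iii) and
(iv) are void and (ii) says that no two vertices have the same open or the same closed
neighborhood, which holds in a cycle as soon as it has no triangle and no 4-cycle.
-/

section Graph

variable {G : SimpleGraph V} {S : Set V} {v : V}

/-- A graph is twin-free if no two distinct vertices are *false twins* (equal open neighborhoods)
or *true twins* (equal closed neighborhoods); this is what condition (ii) of `IsErrLD` requires
when `S` is the whole vertex set. -/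
def IsTwinFree (G : SimpleGraph V) : Prop :=
  Function.Injective G.neighborSet ∧ Function.Injective (closedNbhd G)

theorem encard_closedNbhd (G : SimpleGraph V) (v : V) :
    (closedNbhd G v).encard = (G.neighborSet v).encard + 1 :=
  Set.encard_insert_of_notMem G.irrefl

theorem symmDiff_neighborSet_sdiff_pair_of_adj {u : V} (h : G.Adj v u) :
    (G.neighborSet v ∆ G.neighborSet u) \ {v, u} = closedNbhd G v ∆ closedNbhd G u := by
  have hsymm : G.Adj u v := h.symm
  ext w
  simp only [closedNbhd, Set.mem_sdiff, Set.mem_symmDiff, Set.mem_insert_iff,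
    Set.mem_singleton_iff, SimpleGraph.mem_neighborSet]
  grind

theorem symmDiff_neighborSet_sdiff_pair_of_not_adj {u : V} (h : ¬G.Adj v u) :
    (G.neighborSet v ∆ G.neighborSet u) \ {v, u} = G.neighborSet v ∆ G.neighborSet u := by
  have hv : v ∉ G.neighborSet v ∆ G.neighborSet u := by
    simp [Set.mem_symmDiff, G.adj_comm u v, h]
  have hu : u ∉ G.neighborSet v ∆ G.neighborSet u := by simp [Set.mem_symmDiff, h]
  rw [sdiff_eq_left, Set.disjoint_insert_right, Set.disjoint_singleton_right]
  exact ⟨hv, hu⟩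

theorem symmDiff_neighborSet_sdiff_pair_eq_empty_iff (u v : V) :
    (G.neighborSet v ∆ G.neighborSet u) \ {v, u} = ∅ ↔
      G.neighborSet v = G.neighborSet u ∨ closedNbhd G v = closedNbhd G u := by
  by_cases h : G.Adj v u
  · have hfalse : G.neighborSet v ≠ G.neighborSet u := fun heq ↦
      G.irrefl (show u ∈ G.neighborSet u from heq ▸ h)
    rw [symmDiff_neighborSet_sdiff_pair_of_adj h, ← Set.bot_eq_empty, symmDiff_eq_bot,
      or_iff_right hfalse]
  · have htrue (heq : closedNbhd G v = closedNbhd G u) : G.neighborSet v = G.neighborSet u := by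
      have hmem : u ∈ closedNbhd G v := heq ▸ Set.mem_insert u _
      obtain rfl | hvu := hmem
      · rfl
      · exact absurd hvu h
    rw [symmDiff_neighborSet_sdiff_pair_of_not_adj h, ← Set.bot_eq_empty, symmDiff_eq_bot,
      or_iff_left_of_imp htrue]

theorem isTwinFree_iff :
    IsTwinFree G ↔ ∀ v u, u ≠ v →
      ((G.neighborSet v ∆ G.neighborSet u) \ {v, u}).Nonempty := by
  simp only [Set.nonempty_iff_ne_empty, ne_eq, symmDiff_neighborSet_sdiff_pair_eq_empty_iff,
    IsTwinFree, Function.Injective]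
  grind

theorem isErrLD_univ_iff :
    IsErrLD G Set.univ ↔ (∀ v, 3 ≤ (closedNbhd G v).encard) ∧ IsTwinFree G := by
  simp [IsErrLD, isTwinFree_iff]

theorem IsErrLD.closedNbhd_subset (hS : IsErrLD G S) (hv : (closedNbhd G v).encard ≤ 3) :
    closedNbhd G v ⊆ S := by
  have hfin : (closedNbhd G v).Finite := Set.finite_of_encard_le_coe hv
  exact Set.inter_eq_left.1 <|
    hfin.eq_of_subset_of_encard_le' Set.inter_subset_left (hv.trans (hS.1 v))

theorem IsErrLD.eq_univ (hS : IsErrLD G S) (hG : ∀ v, (closedNbhd G v).encard ≤ 3) :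
    S = Set.univ :=
  Set.eq_univ_of_forall fun v ↦ hS.closedNbhd_subset (hG v) (Set.mem_insert v _)

theorem errLD_cycle_general (hdeg : ∀ v, (G.neighborSet v).encard = 2) (hG : IsTwinFree G) :
    (∀ S : Set V, IsErrLD G S ↔ S = Set.univ) ∧
    (∃ S : Set V, IsErrLD G S ∧ S.encard = ENat.card V) ∧
    (∀ S : Set V, IsErrLD G S → ENat.card V ≤ S.encard) := by
  have hcard (v : V) : (closedNbhd G v).encard = 3 := by
    rw [encard_closedNbhd, hdeg, two_add_one_eq_three]
  have huniv : IsErrLD G Set.univ := isErrLD_univ_iff.2 ⟨fun v ↦ (hcard v).ge, hG⟩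
  have heq {S : Set V} (hS : IsErrLD G S) : S = Set.univ := hS.eq_univ fun v ↦ (hcard v).le
  refine ⟨fun S ↦ ⟨heq, ?_⟩, ⟨Set.univ, huniv, Set.encard_univ V⟩, fun S hS ↦ ?_⟩
  · rintro rfl
    exact huniv
  · rw [heq hS, Set.encard_univ]

end Graph

section Cycle

variable {n : ℕ}

theorem natCast_zmod_ne_zero {k : ℕ} (hk : 0 < k) (hkn : k < n) : (k : ZMod n) ≠ 0 := by
  rw [Ne, ZMod.natCast_eq_zero_iff]
  exact Nat.not_dvd_of_pos_of_lt hk hkn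

theorem neighborSet_cycleGraph (hn : n ≠ 1) (v : ZMod n) :
    (cycleGraph n).neighborSet v = {v + 1, v - 1} := by
  have h1 : (1 : ZMod n) ≠ 0 := by simpa [ZMod.one_eq_zero_iff] using hn
  ext w
  simp only [cycleGraph, SimpleGraph.mem_neighborSet, SimpleGraph.fromRel_adj,
    Set.mem_insert_iff, Set.mem_singleton_iff, eq_sub_iff_add_eq, eq_comm (a := v)]
  refine and_iff_right_of_imp ?_
  rintro (rfl | rfl) <;> simpa using h1

theorem encard_neighborSet_cycleGraph (hn : 3 ≤ n) (v : ZMod n) :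
    ((cycleGraph n).neighborSet v).encard = 2 := by
  have h2 : (2 : ZMod n) ≠ 0 := mod_cast natCast_zmod_ne_zero two_pos hn
  rw [neighborSet_cycleGraph (by lia)]
  exact Set.encard_pair fun h ↦ h2 (by linear_combination h)

theorem injective_neighborSet_cycleGraph (hn : 5 ≤ n) :
    Function.Injective (cycleGraph n).neighborSet := by
  have h4 : (4 : ZMod n) ≠ 0 := mod_cast natCast_zmod_ne_zero four_pos hn
  intro v u h
  simp only [neighborSet_cycleGraph (show n ≠ 1 by lia)] at h
  rcases Set.pair_eq_pair_iff.1 h with ⟨h, -⟩ | ⟨hsucc, hpred⟩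
  · exact add_right_cancel h
  · exact absurd (by linear_combination hsucc - hpred) h4

theorem injective_closedNbhd_cycleGraph (hn : 4 ≤ n) :
    Function.Injective (closedNbhd (cycleGraph n)) := by
  have h1 : (1 : ZMod n) ≠ 0 := mod_cast natCast_zmod_ne_zero one_pos (by lia : 1 < n)
  have h2 : (2 : ZMod n) ≠ 0 := mod_cast natCast_zmod_ne_zero two_pos (by lia : 2 < n)
  have h3 : (3 : ZMod n) ≠ 0 := mod_cast natCast_zmod_ne_zero three_pos hn
  have hmem {v w : ZMod n} : w ∈ closedNbhd (cycleGraph n) v ↔ w = v ∨ w = v + 1 ∨ w = v - 1 := by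
    simp [closedNbhd, neighborSet_cycleGraph (show n ≠ 1 by lia)]
  have hnotMem (v : ZMod n) : v + 2 ∉ closedNbhd (cycleGraph n) v := by
    rw [hmem]
    rintro (h | h | h)
    exacts [h2 (by linear_combination h), h1 (by linear_combination h),
      h3 (by linear_combination h)]
  have hne (v : ZMod n) : closedNbhd (cycleGraph n) v ≠ closedNbhd (cycleGraph n) (v + 1) :=
    fun h ↦ hnotMem v (h ▸ hmem.2 (.inr (.inl (by ring))))
  intro v u h
  rcases hmem.1 (h ▸ Set.mem_insert u _ : u ∈ closedNbhd (cycleGraph n) v) with rfl | rfl | rfl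
  · rfl
  · exact absurd h (hne v)
  · exact absurd (by rw [sub_add_cancel, h]) (hne (v - 1))

theorem isTwinFree_cycleGraph (hn : 5 ≤ n) : IsTwinFree (cycleGraph n) :=
  ⟨injective_neighborSet_cycleGraph hn, injective_closedNbhd_cycleGraph (by lia)⟩

end Cycle

theorem errLD_cycle (n : ℕ) (hn : 5 ≤ n) :
    (∀ S : Set (ZMod n), IsErrLD (cycleGraph n) S ↔ S = Set.univ) ∧
    (∃ S : Set (ZMod n), IsErrLD (cycleGraph n) S ∧ S.ncard = n) ∧
    (∀ S : Set (ZMod n), IsErrLD (cycleGraph n) S → n ≤ S.ncard) := by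
  have : NeZero n := ⟨by lia⟩
  have hV : ENat.card (ZMod n) = n := by rw [ENat.card_eq_coe_natCard, Nat.card_zmod]
  have hncard (S : Set (ZMod n)) : S.encard = S.ncard := S.toFinite.cast_ncard_eq.symm
  simpa only [hV, hncard, Nat.cast_inj, Nat.cast_le] using errLD_cycle_general
    (encard_neighborSet_cycleGraph (by lia)) (isTwinFree_cycleGraph hn)
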